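/- Let x₁,…,xₙ and y₁,…,yₙ be complex numbers, pairwise distinct and with xⱼ − y_k never in the lattice ℤ + τℤ, and let λ be a complex number with θ₁(λ) ≠ 0 and θ₁(S+λ) ≠ 0, where S = ∑_{j=1}^n (xⱼ − yⱼ). Define the elliptic Cauchy matrix B̃_{jk} = θ₁(xⱼ − y_k + λ)/θ₁(xⱼ − y_k). Then B̃ is invertible and its inverse is given by (B̃^{−1})_{jk} = [1/(θ₁(λ)·θ₁(S+λ))] · [θ₁(S+λ−x_k+yⱼ)/θ₁(x_k−yⱼ)] · [∏_{ℓ=1}^n θ₁(x_k−y_ℓ) · ∏_{ℓ=1}^n θ₁(x_ℓ−yⱼ)] / [∏_{ℓ≠k} θ₁(x_k−x_ℓ) · ∏_{ℓ≠j} θ₁(y_ℓ−yⱼ)]. -/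

import Mathlib

open Complex

/-- Jacobi theta function θ₁(u|τ). -/
noncomputable def theta1 (u τ : ℂ) : ℂ :=
  -I * ∑' k : ℤ, (-1 : ℂ) ^ k * Complex.exp ((Real.pi : ℂ) * I * τ * ((k : ℂ) + 1/2) ^ 2) *
      Complex.exp ((Real.pi : ℂ) * I * (2 * (k : ℂ) + 1) * u)

/-- Jacobi theta function θ₂(u|τ). -/
noncomputable def theta2 (u τ : ℂ) : ℂ :=
  ∑' k : ℤ, Complex.exp ((Real.pi : ℂ) * I * τ * ((k : ℂ) + 1/2) ^ 2) *
      Complex.exp ((Real.pi : ℂ) * I * (2 * (k : ℂ) + 1) * u)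

/-- Jacobi theta function θ₃(u|τ). -/
noncomputable def theta3 (u τ : ℂ) : ℂ :=
  ∑' k : ℤ, Complex.exp ((Real.pi : ℂ) * I * τ * (k : ℂ) ^ 2) *
      Complex.exp (2 * (Real.pi : ℂ) * I * (k : ℂ) * u)

/-- Jacobi theta function θ₄(u|τ). -/
noncomputable def theta4 (u τ : ℂ) : ℂ :=
  ∑' k : ℤ, (-1 : ℂ) ^ k * Complex.exp ((Real.pi : ℂ) * I * τ * (k : ℂ) ^ 2) *
      Complex.exp (2 * (Real.pi : ℂ) * I * (k : ℂ) * u)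


/-- even part -/
noncomputable def ecF (τ x : ℂ) : ℂ := ∑' m : ℤ, jacobiTheta₂_term m (2 * x) (2 * τ)

noncomputable def ecGt (τ x : ℂ) (m : ℤ) : ℂ :=
  Complex.exp (Real.pi * I * τ / 2 + 2 * Real.pi * I * x) * jacobiTheta₂_term m (2 * x + τ) (2 * τ)

noncomputable def ecG (τ x : ℂ) : ℂ := ∑' m : ℤ, ecGt τ x m

noncomputable def ecT (τ u : ℂ) (k : ℤ) : ℂ :=
  Complex.exp (Real.pi * I * τ / 4 + Real.pi * I * u) * jacobiTheta₂_term k (u + τ / 2 + 1 / 2) τ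

lemma ec_pow (k : ℤ) : (-1 : ℂ) ^ k = Complex.exp (Real.pi * I * k) := by
  rw [← Complex.exp_pi_mul_I, ← Complex.exp_int_mul]
  congr 1; ring

lemma ec_theta1 (u τ : ℂ) : theta1 u τ = -I * ∑' k : ℤ, ecT τ u k := by
  unfold theta1 ecT jacobiTheta₂_term
  congr 1
  refine tsum_congr fun k => ?_
  rw [ec_pow, ← Complex.exp_add, ← Complex.exp_add, ← Complex.exp_add]
  congr 1; ring

lemma ec_sumT {τ : ℂ} (hτ : 0 < τ.im) (u : ℂ) : Summable (ecT τ u) :=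
  ((summable_jacobiTheta₂_term_iff _ _).2 hτ).mul_left _

lemma ec_im2 {τ : ℂ} (hτ : 0 < τ.im) : 0 < (2 * τ).im := by
  simpa using hτ

lemma ec_sumF {τ : ℂ} (hτ : 0 < τ.im) (u : ℂ) :
    Summable (fun m : ℤ => jacobiTheta₂_term m (2 * u) (2 * τ)) :=
  (summable_jacobiTheta₂_term_iff _ _).2 (ec_im2 hτ)

lemma ec_sumG {τ : ℂ} (hτ : 0 < τ.im) (u : ℂ) : Summable (ecGt τ u) :=
  ((summable_jacobiTheta₂_term_iff _ _).2 (ec_im2 hτ)).mul_left _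

def ecMap : (ℤ × ℤ) ⊕ (ℤ × ℤ) → ℤ × ℤ
  | Sum.inl p => (p.1 + p.2, p.1 - p.2 - 1)
  | Sum.inr p => (p.1 + p.2, p.1 - p.2)

lemma ecMap_bij : Function.Bijective ecMap := by
  constructor
  · rintro (⟨a, b⟩ | ⟨a, b⟩) (⟨c, d⟩ | ⟨c, d⟩) h <;>
      simp only [ecMap, Prod.mk.injEq] at h <;> obtain ⟨h1, h2⟩ := h
    · obtain rfl : a = c := by omega
      obtain rfl : b = d := by omega
      rfl
    · omega
    · omega
    · obtain rfl : a = c := by omega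
      obtain rfl : b = d := by omega
      rfl
  · rintro ⟨k, l⟩
    rcases Int.even_or_odd' (k + l) with ⟨c, hc | hc⟩
    · exact ⟨Sum.inr (c, k - c), by simp only [ecMap, Prod.mk.injEq]; omega⟩
    · exact ⟨Sum.inl (c + 1, k - c - 1), by simp only [ecMap, Prod.mk.injEq]; omega⟩

lemma ec_inl (τ x y : ℂ) (m r : ℤ) :
    ecT τ (x + y) (m + r) * ecT τ (x - y) (m - r - 1) =
      -(jacobiTheta₂_term m (2 * x) (2 * τ) * ecGt τ y r) := by
  unfold ecT ecGt jacobiTheta₂_term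
  rw [← Complex.exp_add, ← Complex.exp_add, ← Complex.exp_add, ← Complex.exp_add,
    ← Complex.exp_add, ← neg_one_mul, ← Complex.exp_pi_mul_I, ← Complex.exp_add,
    Complex.exp_eq_exp_iff_exists_int]
  refine ⟨m - 1, ?_⟩
  push_cast
  ring

lemma ec_inr (τ x y : ℂ) (m r : ℤ) :
    ecT τ (x + y) (m + r) * ecT τ (x - y) (m - r) =
      ecGt τ x m * jacobiTheta₂_term r (2 * y) (2 * τ) := by
  unfold ecT ecGt jacobiTheta₂_term
  rw [← Complex.exp_add, ← Complex.exp_add, ← Complex.exp_add, ← Complex.exp_add,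
    ← Complex.exp_add, 
    Complex.exp_eq_exp_iff_exists_int]
  refine ⟨m, ?_⟩
  push_cast
  ring

lemma ec_prod {τ : ℂ} (hτ : 0 < τ.im) (x y : ℂ) :
    theta1 (x + y) τ * theta1 (x - y) τ = ecF τ x * ecG τ y - ecG τ x * ecF τ y := by
  have hs : Summable fun p : ℤ × ℤ => ecT τ (x + y) p.1 * ecT τ (x - y) p.2 :=
    summable_mul_of_summable_norm (ec_sumT hτ _).norm (ec_sumT hτ _).norm
  have h1 : (∑' k, ecT τ (x + y) k) * (∑' k, ecT τ (x - y) k) =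
      ∑' p : ℤ × ℤ, ecT τ (x + y) p.1 * ecT τ (x - y) p.2 :=
    tsum_mul_tsum_of_summable_norm (ec_sumT hτ _).norm (ec_sumT hτ _).norm
  have h2 := (Equiv.ofBijective ecMap ecMap_bij).hasSum_iff.2 hs.hasSum
  have hFG : HasSum (fun p : ℤ × ℤ => jacobiTheta₂_term p.1 (2 * x) (2 * τ) * ecGt τ y p.2)
      (ecF τ x * ecG τ y) := by
    rw [ecF, ecG, tsum_mul_tsum_of_summable_norm (ec_sumF hτ _).norm (ec_sumG hτ _).norm]
    exact (summable_mul_of_summable_norm (ec_sumF hτ _).norm (ec_sumG hτ _).norm).hasSum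
  have hGF : HasSum (fun p : ℤ × ℤ => ecGt τ x p.1 * jacobiTheta₂_term p.2 (2 * y) (2 * τ))
      (ecG τ x * ecF τ y) := by
    rw [ecF, ecG, tsum_mul_tsum_of_summable_norm (ec_sumG hτ _).norm (ec_sumF hτ _).norm]
    exact (summable_mul_of_summable_norm (ec_sumG hτ _).norm (ec_sumF hτ _).norm).hasSum
  have h3 : HasSum ((fun p : ℤ × ℤ => ecT τ (x + y) p.1 * ecT τ (x - y) p.2) ∘
      (Equiv.ofBijective ecMap ecMap_bij)) (-(ecF τ x * ecG τ y) + ecG τ x * ecF τ y) := by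
    refine HasSum.sum ?_ ?_
    · have hn := hFG.neg
      rw [show (fun p : ℤ × ℤ => -(jacobiTheta₂_term p.1 (2 * x) (2 * τ) * ecGt τ y p.2)) =
        fun p : ℤ × ℤ => ecT τ (x + y) (p.1 + p.2) * ecT τ (x - y) (p.1 - p.2 - 1) from
        funext fun p => (ec_inl τ x y p.1 p.2).symm] at hn
      exact hn
    · convert hGF using 1
      funext p
      exact ec_inr τ x y p.1 p.2
  have h4 := h2.unique h3
  rw [ec_theta1, ec_theta1]
  calc _ = (I * I) * ((∑' k, ecT τ (x + y) k) * (∑' k, ecT τ (x - y) k)) := by ring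
    _ = _ := by rw [h1, h4, I_mul_I]; ring

lemma ec_diff {τ : ℂ} (hτ : 0 < τ.im) : Differentiable ℂ (fun u => theta1 u τ) := by
  have : (fun u => theta1 u τ) = fun u => -I * (Complex.exp (Real.pi * I * τ / 4 + Real.pi * I * u) *
      jacobiTheta₂ (u + τ / 2 + 1 / 2) τ) := by
    funext u
    rw [ec_theta1]
    unfold ecT
    rw [tsum_mul_left]; rfl
  rw [this]
  intro u
  refine DifferentiableAt.const_mul (DifferentiableAt.mul (by fun_prop) ?_) _
  exact DifferentiableAt.comp u (g := fun z => jacobiTheta₂ z τ)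
    (differentiableAt_jacobiTheta₂_fst _ hτ) (by fun_prop)

/-- The sum in the elliptic partial fraction identity. -/
noncomputable def ecA {ι : Type*} [DecidableEq ι] (t : ℂ → ℂ) (s : Finset ι) (z : ι → ℂ)
    (f : ℂ → ℂ) : ℂ :=
  ∑ k ∈ s, f (z k) / ∏ l ∈ s.erase k, t (z k - z l)

lemma ecA_remove {ι : Type*} [DecidableEq ι] (t : ℂ → ℂ) (h0 : t 0 = 0) (s : Finset ι)
    (z : ι → ℂ) (hz : ∀ k ∈ s, ∀ l ∈ s, k ≠ l → t (z k - z l) ≠ 0) (f : ℂ → ℂ)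
    (i : ι) (hi : i ∈ s) :
    ecA t s z (fun u => t (u - z i) * f u) = ecA t (s.erase i) z f := by
  unfold ecA
  rw [← Finset.add_sum_erase s _ hi]
  simp only [sub_self, h0, zero_mul, zero_div, zero_add]
  refine Finset.sum_congr rfl fun k hk => ?_
  obtain ⟨hki, hks⟩ := Finset.mem_erase.1 hk
  have hi' : i ∈ s.erase k := Finset.mem_erase.2 ⟨hki.symm, hi⟩
  rw [← Finset.mul_prod_erase _ _ hi', Finset.erase_right_comm,
    mul_div_mul_left _ _ (hz k hks i hi hki)]

lemma ecA_lin {ι : Type*} [DecidableEq ι] (t : ℂ → ℂ) (s : Finset ι) (z : ι → ℂ)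
    (f g h : ℂ → ℂ) (a b c : ℂ) (H : ∀ u, f u * a = b * g u + c * h u) :
    ecA t s z f * a = b * ecA t s z g + c * ecA t s z h := by
  unfold ecA
  rw [Finset.sum_mul, Finset.mul_sum, Finset.mul_sum, ← Finset.sum_add_distrib]
  refine Finset.sum_congr rfl fun k _ => ?_
  rw [div_mul_eq_mul_div, H]
  ring

lemma ec_weier (t F G : ℂ → ℂ) (hP : ∀ x y, t (x + y) * t (x - y) = F x * G y - G x * F y)
    (a b p q : ℂ) : ∃ c, ∀ u, t (u - a) * t (u - b) * (t (q - p) * t (q - (a + b - p))) =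
      (t (q - a) * t (q - b)) * (t (u - p) * t (u - (a + b - p))) +
      c * (t (u - q) * t (u - (a + b - q))) := by
  have key : ∀ u v, t (u - v) * t (u - (a + b - v)) =
      F (u - (a + b) / 2) * G (v - (a + b) / 2) - G (u - (a + b) / 2) * F (v - (a + b) / 2) := by
    intro u v
    rw [← hP, mul_comm]
    congr 2 <;> ring
  have hb : ∀ u, t (u - b) = t (u - (a + b - a)) := fun u => by congr 1; ring
  refine ⟨F (a - (a + b) / 2) * G (p - (a + b) / 2) - G (a - (a + b) / 2) * F (p - (a + b) / 2),
    fun u => ?_⟩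
  rw [hb, hb, key, key, key, key, key]
  ring

theorem ec_partial {ι : Type*} [DecidableEq ι] (t F G : ℂ → ℂ)
    (hP : ∀ x y, t (x + y) * t (x - y) = F x * G y - G x * F y)
    (hodd : ∀ u, t (-u) = -t u) (hd : Differentiable ℂ t) (lam : ℂ) (hlam : t lam ≠ 0)
    (z : ι → ℂ) (N : ℕ) : ∀ (s : Finset ι) (W : List ℂ),
    (∀ k ∈ s, ∀ l ∈ s, k ≠ l → t (z k - z l) ≠ 0) → s.card = N → W.length = N →
    W.sum = ∑ k ∈ s, z k → ecA t s z (fun u => (W.map fun w => t (u - w)).prod) = 0 := by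
  have h0 : t 0 = 0 := by
    have := hodd 0
    rw [neg_zero] at this
    exact self_eq_neg.1 this
  induction N with
  | zero =>
    intro s W _ hs _ _
    rw [Finset.card_eq_zero] at hs
    simp [hs, ecA]
  | succ N ih =>
    intro s W hz hs hW hsum
    match W, hW with
    | [a], hW =>
      obtain rfl : N = 0 := by simpa using hW.symm
      obtain ⟨i, rfl⟩ := Finset.card_eq_one.1 hs
      have : a = z i := by simpa using hsum
      simp [ecA, this, h0]
    | [a, b], hW =>
      obtain rfl : N = 1 := by simpa using hW.symm
      obtain ⟨i, j, hij, rfl⟩ := Finset.card_eq_two.1 hs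
      have hab : a + b = z i + z j := by simpa [Finset.sum_pair hij] using hsum
      have hb : b = z i + z j - a := by rw [← hab]; ring
      have e1 : ({i, j} : Finset ι).erase i = {j} := by
        ext k; simp only [Finset.mem_erase, Finset.mem_insert, Finset.mem_singleton]
        constructor
        · tauto
        · rintro rfl; exact ⟨hij.symm, Or.inr rfl⟩
      have e2 : ({i, j} : Finset ι).erase j = {i} := by
        ext k; simp only [Finset.mem_erase, Finset.mem_insert, Finset.mem_singleton]
        constructor
        · tauto
        · rintro rfl; exact ⟨hij, Or.inl rfl⟩
      have h1 : t (z j - z i) = - t (z i - z j) := by rw [← hodd]; congr 1; ring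
      have h2 : t (z i - b) = - t (z j - a) := by rw [← hodd, hb]; congr 1; ring
      have h3 : t (z j - b) = - t (z i - a) := by rw [← hodd, hb]; congr 1; ring
      unfold ecA
      rw [Finset.sum_pair hij, e1, e2]
      simp only [List.map_cons, List.map_nil, List.prod_cons, List.prod_nil, mul_one,
        Finset.prod_singleton, h1, h2, h3]
      rw [div_neg]
      ring
    | a :: b :: c :: W', hW =>
      have hN : W'.length + 2 = N := by simpa using hW
      have h1s : 1 < s.card := by omega
      obtain ⟨i, hi, j, hj, hij⟩ := Finset.one_lt_card.1 h1s
      have red : ∀ (k : ι) (_ : k ∈ s) (w : ℂ) (c : ℂ), w + c + W'.sum + z k = ∑ k ∈ s, z k →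
          ecA t s z (fun u => t (u - z k) * (t (u - w) * (t (u - c) *
            (W'.map fun w => t (u - w)).prod))) = 0 := by
        intro k hk w c hw
        rw [ecA_remove t h0 s z hz _ k hk]
        have := ih (s.erase k) (w :: c :: W')
          (fun p hp q hq => hz p (Finset.mem_of_mem_erase hp) q (Finset.mem_of_mem_erase hq))
          (by rw [Finset.card_erase_of_mem hk, hs]; rfl) (by simpa using hN)
          (by
            rw [← Finset.sum_erase_add s _ hk] at hw
            simpa [add_assoc] using add_right_cancel hw)
        simpa using this
      have step : ∀ a b c : ℂ, a + b + c + W'.sum = ∑ k ∈ s, z k →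
          t (z j - (a + b - z i)) *
          ecA t s z (fun u => t (u - a) * (t (u - b) * (t (u - c) *
            (W'.map fun w => t (u - w)).prod))) = 0 := by
        intro a b c habc
        obtain ⟨γ, hγ⟩ := ec_weier t F G hP a b (z i) (z j)
        have := ecA_lin t s z (fun u => t (u - a) * (t (u - b) * (t (u - c) *
            (W'.map fun w => t (u - w)).prod)))
          (fun u => t (u - z i) * (t (u - (a + b - z i)) * (t (u - c) *
            (W'.map fun w => t (u - w)).prod)))
          (fun u => t (u - z j) * (t (u - (a + b - z j)) * (t (u - c) *
            (W'.map fun w => t (u - w)).prod)))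
          (t (z j - z i) * t (z j - (a + b - z i))) (t (z j - a) * t (z j - b)) γ
          (fun u => by linear_combination (t (u - c) * (W'.map fun w => t (u - w)).prod) * hγ u)
        rw [red i hi _ _ (by rw [← habc]; ring), red j hj _ _ (by rw [← habc]; ring)] at this
        have hne := hz j hj i hi hij.symm
        have h' : t (z j - z i) * (t (z j - (a + b - z i)) *
          ecA t s z (fun u => t (u - a) * (t (u - b) * (t (u - c) *
            (W'.map fun w => t (u - w)).prod)))) = 0 := by
          linear_combination this
        exact (mul_eq_zero.1 h').resolve_left hne
      have hsum' : a + b + c + W'.sum = ∑ k ∈ s, z k := by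
        rw [← hsum]; simp [add_assoc]
      set g : ℂ → ℂ := fun e => t (z j - (a + e + b - z i)) with hg
      set h : ℂ → ℂ := fun e => ecA t s z (fun u => t (u - (a + e)) * (t (u - b) *
        (t (u - (c - e)) * (W'.map fun w => t (u - w)).prod))) with hh
      have hgd : Differentiable ℂ g := hd.comp (by fun_prop)
      have hhd : Differentiable ℂ h := by
        rw [hh]
        unfold ecA
        refine Differentiable.fun_sum fun k _ => ?_
        refine Differentiable.div_const ?_ _
        have d1 : Differentiable ℂ fun e => t (z k - (a + e)) := hd.comp (by fun_prop)
        have d2 : Differentiable ℂ fun e => t (z k - (c - e)) := hd.comp (by fun_prop)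
        fun_prop
      have hgh : ∀ e, g e * h e = 0 := fun e => step (a + e) b (c - e) (by rw [← hsum']; ring)
      have hfin : h 0 = 0 := by
        rcases AnalyticOnNhd.eq_zero_or_eq_zero_of_mul_eq_zero (U := Set.univ)
          (fun e _ => hgd.analyticAt e) (fun e _ => hhd.analyticAt e)
          (fun e _ => hgh e) isPreconnected_univ with H | H
        · exfalso
          have := H (z j - (a + b - z i) - lam) (Set.mem_univ _)
          apply hlam
          rw [← this]
          simp only [hg]
          congr 1
          ring
        · exact H 0 (Set.mem_univ _)
      simpa [hh] using hfin

theorem elliptic_cauchy_matrix_inverse (τ : ℂ) (hτ : 0 < τ.im) (n : ℕ)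
    (x y : Fin n → ℂ) (lam : ℂ)
    (hx : Function.Injective x) (hy : Function.Injective y)
    (hlat : ∀ j k, ∀ p q : ℤ, x j - y k ≠ (p : ℂ) + (q : ℂ) * τ)
    (hxy : ∀ j k, theta1 (x j - y k) τ ≠ 0)
    (hxx : ∀ j k, j ≠ k → theta1 (x j - x k) τ ≠ 0)
    (hyy : ∀ j k, j ≠ k → theta1 (y j - y k) τ ≠ 0)
    (hlam : theta1 lam τ ≠ 0)
    (hS : theta1 ((∑ j, (x j - y j)) + lam) τ ≠ 0)
    (Bt C : Matrix (Fin n) (Fin n) ℂ)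
    (hBt : ∀ j k, Bt j k = theta1 (x j - y k + lam) τ / theta1 (x j - y k) τ)
    (hC : ∀ j k, C j k =
      (1 / (theta1 lam τ * theta1 ((∑ j, (x j - y j)) + lam) τ)) *
        (theta1 ((∑ j, (x j - y j)) + lam - x k + y j) τ / theta1 (x k - y j) τ) *
        ((∏ l, theta1 (x k - y l) τ) * ∏ l, theta1 (x l - y j) τ) /
        ((∏ l ∈ Finset.univ.erase k, theta1 (x k - x l) τ) *
          ∏ l ∈ Finset.univ.erase j, theta1 (y l - y j) τ)) :
    Bt * C = 1 ∧ C * Bt = 1 := by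
  have hodd : ∀ u, theta1 (-u) τ = -theta1 u τ := by
    intro u
    have h1 := ec_prod hτ ((lam + u) / 2) ((lam - u) / 2)
    have h2 := ec_prod hτ ((lam - u) / 2) ((lam + u) / 2)
    rw [show (lam + u) / 2 + (lam - u) / 2 = lam by ring,
      show (lam + u) / 2 - (lam - u) / 2 = u by ring] at h1
    rw [show (lam - u) / 2 + (lam + u) / 2 = lam by ring,
      show (lam - u) / 2 - (lam + u) / 2 = -u by ring] at h2
    apply mul_left_cancel₀ hlam
    linear_combination h1 + h2
  have hsw : ∀ u v, theta1 (u - v) τ = -theta1 (v - u) τ := by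
    intro u v
    rw [← hodd]; congr 1; ring
  have hBC : Bt * C = 1 := by
    ext j m
    rw [Matrix.mul_apply]
    set S : ℂ := ∑ j, (x j - y j) with hSdef
    let z : Option (Fin n) → ℂ := fun o => o.elim (x m) y
    have hz : ∀ k ∈ (Finset.univ : Finset (Option (Fin n))), ∀ l ∈ Finset.univ, k ≠ l →
        theta1 (z k - z l) τ ≠ 0 := by
      rintro (_ | k) - (_ | l) - hkl
      · exact absurd rfl hkl
      · exact hxy m l
      · change theta1 (y k - x m) τ ≠ 0
        rw [hsw]; exact neg_ne_zero.2 (hxy m k)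
      · exact hyy k l (fun h => hkl (by rw [h]))
    have hn : 0 < n := j.pos
    have main := ec_partial (fun u => theta1 u τ) (ecF τ) (ecG τ) (ec_prod hτ) hodd (ec_diff hτ)
      lam hlam z (n + 1) Finset.univ
      ((x j + lam) :: (x m - S - lam) :: ((Finset.univ.erase j).toList.map x)) hz
      (by simp) (by simp; omega)
      (by
        rw [Fintype.sum_option]
        simp only [List.sum_cons, Finset.sum_map_toList]
        have h1 := Finset.add_sum_erase Finset.univ x (Finset.mem_univ j)
        have h2 : S = ∑ l, x l - ∑ l, y l := by rw [hSdef, Finset.sum_sub_distrib]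
        change _ = x m + ∑ i, y i
        linear_combination h1 - h2)
    unfold ecA at main
    rw [Fintype.sum_option] at main
    have en : (Finset.univ : Finset (Option (Fin n))).erase none =
        Finset.univ.map Function.Embedding.some := by
      ext (_ | k) <;> simp
    have es : ∀ k : Fin n, (Finset.univ : Finset (Option (Fin n))).erase (some k) =
        insert none ((Finset.univ.erase k).map Function.Embedding.some) := by
      intro k
      ext (_ | l) <;> simp
    have pn : ∏ l ∈ (Finset.univ : Finset (Option (Fin n))).erase none, theta1 (z none - z l) τ =
        ∏ l, theta1 (x m - y l) τ := by
      rw [en, Finset.prod_map]; rfl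
    have ps : ∀ k : Fin n, ∏ l ∈ (Finset.univ : Finset (Option (Fin n))).erase (some k),
        theta1 (z (some k) - z l) τ =
        theta1 (y k - x m) τ * ∏ l ∈ Finset.univ.erase k, theta1 (y k - y l) τ := by
      intro k
      rw [es, Finset.prod_insert (by simp), Finset.prod_map]; rfl
    simp only [pn, ps] at main
    simp only [List.map_cons, List.prod_cons, List.map_map, Function.comp_def,
      Finset.prod_map_toList] at main
    simp only [z, Option.elim] at main
    have hA : ∏ l, theta1 (x m - y l) τ ≠ 0 := Finset.prod_ne_zero_iff.2 fun l _ => hxy m l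
    have hD : ∏ l ∈ Finset.univ.erase m, theta1 (x m - x l) τ ≠ 0 :=
      Finset.prod_ne_zero_iff.2 fun l hl => hxx m l (Finset.ne_of_mem_erase hl).symm
    have hterm : ∀ k, Bt j k * C k m = (∏ l, theta1 (x m - y l) τ) /
        (theta1 lam τ * theta1 (S + lam) τ * ∏ l ∈ Finset.univ.erase m, theta1 (x m - x l) τ) *
        (theta1 (y k - (x j + lam)) τ * (theta1 (y k - (x m - S - lam)) τ *
          ∏ l ∈ Finset.univ.erase j, theta1 (y k - x l) τ) /
          (theta1 (y k - x m) τ * ∏ l ∈ Finset.univ.erase k, theta1 (y k - y l) τ)) := by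
      intro k
      have hE : ∏ l ∈ Finset.univ.erase k, theta1 (y k - y l) τ ≠ 0 :=
        Finset.prod_ne_zero_iff.2 fun l hl => hyy k l (Finset.ne_of_mem_erase hl).symm
      have s1 : ∏ l ∈ Finset.univ.erase k, theta1 (y l - y k) τ =
          (-1) ^ (n - 1) * ∏ l ∈ Finset.univ.erase k, theta1 (y k - y l) τ := by
        rw [Finset.prod_congr rfl fun l _ => hsw (y l) (y k), Finset.prod_neg]
        simp
      have s2 : ∏ l, theta1 (x l - y k) τ = theta1 (x j - y k) τ *
          ((-1) ^ (n - 1) * ∏ l ∈ Finset.univ.erase j, theta1 (y k - x l) τ) := by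
        rw [← Finset.mul_prod_erase _ _ (Finset.mem_univ j)]
        rw [Finset.prod_congr rfl fun l _ => hsw (x l) (y k), Finset.prod_neg]
        simp
      have s3 : theta1 (y k - (x j + lam)) τ = -theta1 (x j - y k + lam) τ := by
        rw [← hodd]; congr 1; ring
      have s4 : theta1 (y k - (x m - S - lam)) τ = theta1 (S + lam - x m + y k) τ := by
        congr 1; ring
      have hs : ((-1 : ℂ) ^ (n - 1)) ≠ 0 := pow_ne_zero _ (by norm_num)
      have hjk := hxy j k
      have hmk := hxy m k
      rw [hBt, hC, s1, s2, s3, s4, hsw (y k) (x m)]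
      field_simp
    rw [Finset.sum_congr rfl fun k _ => hterm k, ← Finset.mul_sum,
      eq_neg_of_add_eq_zero_right main]
    have q1 : theta1 (x m - (x m - S - lam)) τ = theta1 (S + lam) τ := by congr 1; ring
    by_cases hjm : j = m
    · subst hjm
      have q2 : theta1 (x j - (x j + lam)) τ = -theta1 lam τ := by
        rw [← hodd]; congr 1; ring
      rw [Matrix.one_apply_eq, q1, q2]
      field_simp
    · have t0 : theta1 0 τ = 0 := by
        have := hodd 0
        rw [neg_zero] at this
        exact self_eq_neg.1 this
      have : ∏ l ∈ Finset.univ.erase j, theta1 (x m - x l) τ = 0 :=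
        Finset.prod_eq_zero (Finset.mem_erase.2 ⟨Ne.symm hjm, Finset.mem_univ m⟩)
          (by rw [sub_self, t0])
      rw [Matrix.one_apply_ne hjm, this]
      simp
  exact ⟨hBC, mul_eq_one_comm.1 hBC⟩
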